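/- arXiv:1304.4354 — 4 statements merged into one kernel-verified Lean document; each statement's English description precedes it below -/
import Mathlib

section
/- Let r_0, r_1, ..., r_d be the orthogonal polynomial sequence for the discrete scalar product on a mesh of d+1 real points, normalized so that ‖r_i‖² = r_i(λ_0). Then the highest-degree polynomial satisfies r_d(λ_0) = (1/w_0)·(Σ_{i=0}^d (w_0 π_0²)/(w_i π_i²))^{-1}, where π_i = Π_{j≠i} |λ_i − λ_j| for i = 0,...,d. -/
open Polynomial Finset

/-- The discrete scalar product `⟨f,g⟩ = ∑_{i∈s} w i · f(λ i) · g(λ i)` on a mesh. -/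
def discInner (s : Finset ℕ) (lam w : ℕ → ℝ) (f g : Polynomial ℝ) : ℝ :=
  ∑ i ∈ s, w i * f.eval (lam i) * g.eval (lam i)

/-- `π_i = ∏_{j ≠ i} |λ_i − λ_j|`, the product over the mesh `λ_0,…,λ_d`. -/
def meshPi (d : ℕ) (lam : ℕ → ℝ) (i : ℕ) : ℝ :=
  ∏ j ∈ (Finset.range (d + 1)).erase i, |lam i - lam j|

/-- Subtracting the right multiple of a polynomial of degree `n` lowers the degree below `n`. -/
theorem degree_sub_C_mul_lt_of_degree_eq {p q : ℝ[X]} {n : ℕ} (hp : p.degree < (n + 1 : ℕ))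
    (hq : q.degree = n) : (p - C (p.coeff n / q.coeff n) * q).degree < n := by
  have hqn : q.coeff n ≠ 0 := coeff_ne_zero_of_eq_degree hq
  rw [degree_lt_iff_coeff_zero] at hp ⊢
  intro m hm
  rw [coeff_sub, coeff_C_mul]
  rcases hm.eq_or_lt with rfl | hlt
  · field_simp
    ring
  · have hqm : q.coeff m = 0 := coeff_eq_zero_of_degree_lt (by rw [hq]; exact_mod_cast hlt)
    rw [hp m hlt, hqm]
    ring

theorem discInner_sub_C_mul_right (s : Finset ℕ) (lam w : ℕ → ℝ) (f p q : ℝ[X]) (c : ℝ) :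
    discInner s lam w f (p - C c * q) = discInner s lam w f p - c * discInner s lam w f q := by
  simp only [discInner, eval_sub, eval_mul, eval_C, mul_sum, ← sum_sub_distrib]
  exact sum_congr rfl fun i _ => by ring

/-- A polynomial orthogonal to a sequence with `deg (r i) = i`, `i < n`, is orthogonal to
every polynomial of degree less than `n`. -/
theorem discInner_eq_zero_of_degree_lt (s : Finset ℕ) (lam w : ℕ → ℝ) (f : ℝ[X])
    (r : ℕ → ℝ[X]) (n : ℕ) (hdeg : ∀ i < n, (r i).degree = (i : WithBot ℕ))
    (horth : ∀ i < n, discInner s lam w f (r i) = 0) (p : ℝ[X]) (hp : p.degree < n) :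
    discInner s lam w f p = 0 := by
  induction n generalizing p with
  | zero =>
    have hp0 : p = 0 := by simpa [Nat.WithBot.lt_zero_iff] using hp
    simp [discInner, hp0]
  | succ n ih =>
    have h := ih (fun i hi => hdeg i (by omega)) (fun i hi => horth i (by omega)) _
      (degree_sub_C_mul_lt_of_degree_eq hp (hdeg n n.lt_succ_self))
    rwa [discInner_sub_C_mul_right, horth n n.lt_succ_self, mul_zero, sub_zero] at h

theorem discInner_self_pos {s : Finset ℕ} {lam w : ℕ → ℝ} (hlam : Set.InjOn lam s)
    (hw : ∀ i ∈ s, 0 < w i) {f : ℝ[X]} (hf : f ≠ 0) (hdeg : f.degree < #s) :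
    0 < discInner s lam w f f := by
  have hnonneg : ∀ i ∈ s, 0 ≤ w i * f.eval (lam i) * f.eval (lam i) := fun i hi => by
    rw [mul_assoc]
    exact mul_nonneg (hw i hi).le (mul_self_nonneg _)
  refine (sum_nonneg hnonneg).lt_of_ne' fun h => hf ?_
  refine eq_zero_of_degree_lt_of_eval_index_eq_zero _ hlam hdeg fun i hi => ?_
  simpa [(hw i hi).ne'] using (sum_eq_zero_iff_of_nonneg hnonneg).1 h i hi

/-- Pairing with a Lagrange basis polynomial extracts a weighted value. -/
theorem discInner_basis {s : Finset ℕ} {lam : ℕ → ℝ} (hlam : Set.InjOn lam s) (w : ℕ → ℝ)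
    (f : ℝ[X]) {i : ℕ} (hi : i ∈ s) :
    discInner s lam w f (Lagrange.basis s lam i) = w i * f.eval (lam i) := by
  rw [discInner, sum_eq_single_of_mem i hi, Lagrange.eval_basis_self hlam hi, mul_one]
  intro j hj hji
  rw [Lagrange.eval_basis_of_ne hji.symm hj, mul_zero]

theorem coeff_basis_range {d : ℕ} {lam : ℕ → ℝ} (hlam : Set.InjOn lam (range (d + 1))) {i : ℕ}
    (hi : i ∈ range (d + 1)) :
    (Lagrange.basis (range (d + 1)) lam i).coeff d =
      Lagrange.nodalWeight (range (d + 1)) lam i := by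
  have h := Lagrange.leadingCoeff_basis hlam hi
  rw [leadingCoeff, Lagrange.natDegree_basis hlam hi, card_range, Nat.add_sub_cancel] at h
  rw [h, Lagrange.nodalWeight, prod_inv_distrib]

theorem meshPi_sq (d : ℕ) (lam : ℕ → ℝ) (i : ℕ) :
    meshPi d lam i ^ 2 = (Lagrange.nodalWeight (range (d + 1)) lam i ^ 2)⁻¹ := by
  rw [meshPi, ← abs_prod, sq_abs, Lagrange.nodalWeight, prod_inv_distrib, inv_pow, inv_inv]

/-- Lemma 1(b): the highest-degree orthogonal polynomial satisfies
`r_d(λ_0) = (1/w_0)·(∑_{i=0}^d (w_0 π_0²)/(w_i π_i²))⁻¹`. -/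
theorem stmt_1 (d : ℕ) (lam : ℕ → ℝ) (hlam : StrictAntiOn lam (Set.Iic d))
    (w : ℕ → ℝ) (hw : ∀ i ≤ d, 0 < w i)
    (hwsum : ∑ i ∈ Finset.range (d + 1), w i = 1)
    (r : ℕ → Polynomial ℝ)
    (hdeg : ∀ i ≤ d, (r i).degree = (i : WithBot ℕ))
    (horth : ∀ i ≤ d, ∀ j ≤ d, i ≠ j →
      discInner (Finset.range (d + 1)) lam w (r i) (r j) = 0)
    (hnorm : ∀ i ≤ d,
      discInner (Finset.range (d + 1)) lam w (r i) (r i) = (r i).eval (lam 0)) :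
    (r d).eval (lam 0) =
      (1 / w 0) *
        (∑ i ∈ Finset.range (d + 1),
          (w 0 * meshPi d lam 0 ^ 2) / (w i * meshPi d lam i ^ 2))⁻¹ := by
  have hinj : Set.InjOn lam (range (d + 1)) := fun i hi j hj h =>
    hlam.injOn (by simpa [Nat.lt_succ_iff] using hi) (by simpa [Nat.lt_succ_iff] using hj) h
  have hwpos : ∀ i ∈ range (d + 1), 0 < w i := fun i hi => hw i (mem_range_succ_iff.1 hi)
  have h0 : 0 ∈ range (d + 1) := mem_range.2 d.succ_pos
  have hrd : r d ≠ 0 := fun h => by simpa [h] using hdeg d le_rfl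
  set a := (r d).coeff d
  have ha0 : a ≠ 0 := coeff_ne_zero_of_eq_degree (hdeg d le_rfl)
  set N := (r d).eval (lam 0) with hN
  have hNpos : 0 < N := by
    rw [hN, ← hnorm d le_rfl]
    refine discInner_self_pos hinj hwpos hrd ?_
    rw [hdeg d le_rfl, card_range]
    exact_mod_cast d.lt_succ_self
  set u := Lagrange.nodalWeight (range (d + 1)) lam with hu
  have hu0 : ∀ i ∈ range (d + 1), u i ≠ 0 := fun i hi => Lagrange.nodalWeight_ne_zero hinj hi
  have hval : ∀ i ∈ range (d + 1), w i * (r d).eval (lam i) = u i / a * N := fun i hi => by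
    have hlt : (Lagrange.basis (range (d + 1)) lam i).degree < (d + 1 : ℕ) := by
      rw [Lagrange.degree_basis hinj hi, card_range]
      exact_mod_cast d.lt_succ_self
    have h := discInner_eq_zero_of_degree_lt (range (d + 1)) lam w (r d) r d
      (fun i hi => hdeg i hi.le) (fun i hi => horth d le_rfl i hi.le hi.ne') _
      (degree_sub_C_mul_lt_of_degree_eq hlt (hdeg d le_rfl))
    rw [discInner_sub_C_mul_right, discInner_basis hinj w _ hi, hnorm d le_rfl,
      coeff_basis_range hinj hi] at h
    exact sub_eq_zero.1 h
  have hw0 := (hwpos 0 h0).ne'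
  have hau : a = u 0 / w 0 := by
    have h : w 0 * N = u 0 / a * N := hval 0 h0
    rw [eq_div_iff hw0, mul_comm, mul_right_cancel₀ hNpos.ne' h]
    field_simp
  have hsum : N = w 0 * N ^ 2 * ∑ i ∈ range (d + 1),
      (w 0 * meshPi d lam 0 ^ 2) / (w i * meshPi d lam i ^ 2) := by
    conv_lhs => rw [hN, ← hnorm d le_rfl, discInner]
    rw [mul_sum]
    refine sum_congr rfl fun i hi => ?_
    have hwi := (hwpos i hi).ne'
    have hui := hu0 i hi
    have hu00 := hu0 0 h0
    have hev : (r d).eval (lam i) = u i / a * N / w i := by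
      rw [← hval i hi]
      field_simp
    rw [hev, hau, meshPi_sq, meshPi_sq, ← hu]
    field_simp
  have hone : N * (w 0 * ∑ i ∈ range (d + 1),
      (w 0 * meshPi d lam 0 ^ 2) / (w i * meshPi d lam i ^ 2)) = 1 := by
    refine mul_left_cancel₀ hNpos.ne' ?_
    linear_combination -hsum
  rw [one_div, ← mul_inv]
  exact eq_inv_of_mul_eq_one_left hone
end

section
/- Let Γ be a connected bipartite graph with stable sets V_1 and V_2. Then for every nonzero eigenvalue λ_i of Γ, the local multiplicities satisfy Σ_{u∈V_1} m_u(λ_i) = Σ_{v∈V_2} m_v(λ_i) = (1/2) m(λ_i). -/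
open Finset Matrix

/-- On a stable set `S` with stable complement `T`, the diagonal entries of `A * M` over `S` only
involve the block of `M` between `T` and `S`. -/
theorem sum_diag_adjMatrix_mul {V R : Type*} [Fintype V] [DecidableEq V] [NonAssocSemiring R]
    (G : SimpleGraph V) [DecidableRel G.Adj] {S T : Finset V} (hcover : S ∪ T = Finset.univ)
    (hdisj : Disjoint S T) (hind : ∀ u ∈ S, ∀ v ∈ S, ¬ G.Adj u v) (M : Matrix V V R) :
    ∑ u ∈ S, (G.adjMatrix R * M) u u = ∑ u ∈ S, ∑ v ∈ T, G.adjMatrix R u v * M v u := by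
  refine Finset.sum_congr rfl fun u hu => ?_
  rw [Matrix.mul_apply, ← hcover, Finset.sum_union hdisj,
    Finset.sum_eq_zero fun v hv => by simp [hind u hu v hv], zero_add]

/-- Lemma 2(a): in a connected bipartite graph with stable sets `V₁, V₂`, the local
multiplicities `m_u(λ_i) = (E_i)_{uu}` of any nonzero eigenvalue `λ_i` satisfy
`∑_{u∈V₁} m_u(λ_i) = ∑_{v∈V₂} m_v(λ_i) = m(λ_i)/2`. -/
theorem stmt_3 {V : Type*} [Fintype V] [DecidableEq V]
    (G : SimpleGraph V) [DecidableRel G.Adj] (hconn : G.Connected)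
    (V1 V2 : Finset V) (hcover : V1 ∪ V2 = Finset.univ) (hdisj : Disjoint V1 V2)
    (hind1 : ∀ u ∈ V1, ∀ v ∈ V1, ¬ G.Adj u v)
    (hind2 : ∀ u ∈ V2, ∀ v ∈ V2, ¬ G.Adj u v)
    -- the distinct eigenvalues `λ_0 > λ_1 > ⋯ > λ_d` and principal idempotents `E_i`
    (d : ℕ) (lam : ℕ → ℝ) (hlam : StrictAntiOn lam (Set.Iic d))
    (E : ℕ → Matrix V V ℝ)
    (hsym : ∀ i ≤ d, (E i).IsSymm)
    (hsum : ∑ i ∈ Finset.range (d + 1), E i = 1)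
    (hmul : ∀ i ≤ d, ∀ j ≤ d, E i * E j = if i = j then E i else 0)
    (heig : ∀ i ≤ d, G.adjMatrix ℝ * E i = lam i • E i)
    (hnz : ∀ i ≤ d, E i ≠ 0) :
    ∀ i ≤ d, lam i ≠ 0 →
      (∑ u ∈ V1, E i u u = ∑ v ∈ V2, E i v v ∧
        ∑ u ∈ V1, E i u u = Matrix.trace (E i) / 2) := by
  intro i hi hne
  have hV1 := sum_diag_adjMatrix_mul G hcover hdisj hind1 (E i)
  have hV2 := sum_diag_adjMatrix_mul G (Finset.union_comm V1 V2 ▸ hcover) hdisj.symm hind2 (E i)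
  have hswap : ∑ u ∈ V1, ∑ v ∈ V2, G.adjMatrix ℝ u v * E i v u =
      ∑ v ∈ V2, ∑ u ∈ V1, G.adjMatrix ℝ v u * E i u v := by
    rw [Finset.sum_comm]
    refine Finset.sum_congr rfl fun v _ => Finset.sum_congr rfl fun u _ => ?_
    rw [(hsym i hi).apply u v, (G.isSymm_adjMatrix (α := ℝ)).apply v u]
  have heq : ∑ u ∈ V1, E i u u = ∑ v ∈ V2, E i v v := by
    refine mul_left_cancel₀ hne ?_
    have h := hV1.trans (hswap.trans hV2.symm)
    rw [heig i hi] at h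
    simpa [Finset.mul_sum] using h
  have htrace : Matrix.trace (E i) = ∑ u ∈ V1, E i u u + ∑ v ∈ V2, E i v v := by
    rw [← Finset.sum_union hdisj, hcover]
    rfl
  exact ⟨heq, by linarith⟩
end

section
/- Let Γ be a connected bipartite graph with stable sets V_1 and V_2 of sizes n_1 and n_2. Then the local multiplicities of the eigenvalue 0 satisfy Σ_{u∈V_1} m_u(0) = (1/2)(n_1 − n_2 + m(0)). -/
open Finset Matrix

/-- If `S` anticommutes with `A`, and `E` commutes with `A` with `A * E = μ • E` for some `μ ≠ 0`,
then `S * E` is traceless. -/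
theorem trace_mul_eq_zero_of_anticommute {V : Type*} [Fintype V] {A S E : Matrix V V ℝ} {μ : ℝ}
    (hμ : μ ≠ 0) (hSA : S * A = -(A * S)) (hAE : A * E = μ • E) (hEA : E * A = μ • E) :
    (S * E).trace = 0 := by
  have h : μ * (S * E).trace = -(μ * (S * E).trace) := by
    calc μ * (S * E).trace = (S * A * E).trace := by
          rw [Matrix.mul_assoc, hAE, Matrix.mul_smul, trace_smul, smul_eq_mul]
      _ = -(S * E * A).trace := by
          rw [hSA, Matrix.neg_mul, trace_neg, Matrix.mul_assoc, trace_mul_comm]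
      _ = -(μ * (S * E).trace) := by
          rw [Matrix.mul_assoc, hEA, Matrix.mul_smul, trace_smul, smul_eq_mul]
  have h0 : μ * (S * E).trace = 0 := by linarith
  exact (mul_eq_zero.mp h0).resolve_left hμ

/-- A diagonal matrix whose entries change sign along edges anticommutes with the adjacency
matrix. -/
theorem diagonal_mul_adjMatrix_of_sign_change {V : Type*} [Fintype V] [DecidableEq V]
    (G : SimpleGraph V) [DecidableRel G.Adj] {s : V → ℝ} (hs : ∀ u v, G.Adj u v → s u = -s v) :
    diagonal s * G.adjMatrix ℝ = -(G.adjMatrix ℝ * diagonal s) := by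
  ext u v
  rw [diagonal_mul, Matrix.neg_apply, mul_diagonal, SimpleGraph.adjMatrix_apply]
  split_ifs with h
  · simp [hs u v h]
  · simp

/-- Weighting by the signs of a bipartition gives the difference of the sums over both parts. -/
theorem sum_sign_mul_eq_sub {V : Type*} [Fintype V] [DecidableEq V] {V1 V2 : Finset V}
    (hcover : V1 ∪ V2 = univ) (hdisj : Disjoint V1 V2) (f : V → ℝ) :
    ∑ u, (if u ∈ V1 then (1 : ℝ) else -1) * f u = ∑ u ∈ V1, f u - ∑ u ∈ V2, f u := by
  rw [← hcover, sum_union hdisj, sub_eq_add_neg, ← sum_neg_distrib]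
  congr 1
  · exact sum_congr rfl fun u hu => by simp [hu]
  · exact sum_congr rfl fun u hu => by simp [disjoint_right.mp hdisj hu]

/-- Lemma 2(b1): in a connected bipartite graph with stable sets `V₁, V₂` of sizes
`n₁, n₂`, the local multiplicities of the eigenvalue `0` satisfy
`∑_{u∈V₁} m_u(0) = (n₁ − n₂ + m(0))/2`, where `m(0)` is the multiplicity of `0`
(with `m(0) = 0` and `m_u(0) = 0` when `0` is not an eigenvalue; both sides below use
the sum over those indices `i` with `λ_i = 0`, which has at most one term). -/
theorem stmt_4 {V : Type*} [Fintype V] [DecidableEq V]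
    (G : SimpleGraph V) [DecidableRel G.Adj] (hconn : G.Connected)
    (V1 V2 : Finset V) (hcover : V1 ∪ V2 = Finset.univ) (hdisj : Disjoint V1 V2)
    (hind1 : ∀ u ∈ V1, ∀ v ∈ V1, ¬ G.Adj u v)
    (hind2 : ∀ u ∈ V2, ∀ v ∈ V2, ¬ G.Adj u v)
    (d : ℕ) (lam : ℕ → ℝ) (hlam : StrictAntiOn lam (Set.Iic d))
    (E : ℕ → Matrix V V ℝ)
    (hsym : ∀ i ≤ d, (E i).IsSymm)
    (hsum : ∑ i ∈ Finset.range (d + 1), E i = 1)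
    (hmul : ∀ i ≤ d, ∀ j ≤ d, E i * E j = if i = j then E i else 0)
    (heig : ∀ i ≤ d, G.adjMatrix ℝ * E i = lam i • E i)
    (hnz : ∀ i ≤ d, E i ≠ 0) :
    ∑ u ∈ V1, (∑ i ∈ (Finset.range (d + 1)).filter (fun i => lam i = 0), E i u u)
      = ((V1.card : ℝ) - (V2.card : ℝ)
          + ∑ i ∈ (Finset.range (d + 1)).filter (fun i => lam i = 0),
              Matrix.trace (E i)) / 2 := by
  set s : V → ℝ := fun u => if u ∈ V1 then 1 else -1 with hs_def
  have hs : ∀ u v, G.Adj u v → s u = -s v := by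
    intro u v huv
    have hmem : ∀ w, w ∈ V1 ∨ w ∈ V2 := fun w => by
      rw [← mem_union, hcover]; exact mem_univ w
    by_cases hu : u ∈ V1 <;> by_cases hv : v ∈ V1
    · exact absurd huv (hind1 u hu v hv)
    · simp [hs_def, hu, hv]
    · simp [hs_def, hu, hv]
    · exact absurd huv
        (hind2 u ((hmem u).resolve_left hu) v ((hmem v).resolve_left hv))
  have hSA := diagonal_mul_adjMatrix_of_sign_change G hs
  have hEA : ∀ i ≤ d, E i * G.adjMatrix ℝ = lam i • E i := fun i hi => by
    have h := congrArg transpose (heig i hi)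
    rwa [transpose_mul, transpose_smul, (hsym i hi).eq, SimpleGraph.transpose_adjMatrix] at h
  have hzero : ∑ i ∈ (range (d + 1)).filter (fun i => lam i = 0), (diagonal s * E i).trace
      = (diagonal s).trace := by
    rw [sum_filter_of_ne, ← trace_sum, ← Matrix.mul_sum, hsum, Matrix.mul_one]
    intro i hi hne
    have hid : i ≤ d := Nat.lt_succ_iff.mp (mem_range.mp hi)
    by_contra hl
    exact hne (trace_mul_eq_zero_of_anticommute hl hSA (heig i hid) (hEA i hid))
  set m : V → ℝ := fun u => ∑ i ∈ (range (d + 1)).filter (fun i => lam i = 0), E i u u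
  have hsigned : ∑ u, s u * m u = ∑ u, s u * 1 := by
    simp only [trace, diag_apply, diagonal_mul, diagonal_apply_eq] at hzero
    rw [sum_comm] at hzero
    simpa only [m, mul_sum, mul_one] using hzero
  have htrace : ∑ i ∈ (range (d + 1)).filter (fun i => lam i = 0), (E i).trace
      = ∑ u ∈ V1, m u + ∑ u ∈ V2, m u := by
    rw [← sum_union hdisj, hcover]
    exact sum_comm
  rw [sum_sign_mul_eq_sub hcover hdisj, sum_sign_mul_eq_sub hcover hdisj] at hsigned
  simp only [sum_const, nsmul_eq_mul, mul_one] at hsigned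
  rw [htrace]
  linarith
end

section
/- Let Γ be a connected graph and u a vertex of Γ with d_u + 1 distinct local eigenvalues. Then equality q_{d_u−1}^u(λ_0)/‖q_{d_u−1}^u‖_u = (1/α_u)·‖ρ_{N_{d_u−1}(u)}‖ holds if and only if u has maximum eccentricity ecc(u) = d_u and Γ is pseudo-distance-regular around u. -/
open Polynomial Finset Matrix

/-- `Γ_i(u)`: the set of vertices at distance `i` from `u`. -/
noncomputable def sphere {V : Type*} [Fintype V] [DecidableEq V] (G : SimpleGraph V)
    (u : V) (i : ℕ) : Finset V :=
  Finset.univ.filter (fun v => G.dist u v = i)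

/-- `Γ` is pseudo-distance-regular around `u` (w.r.t. the positive eigenvector `α`):
for every `i`, the numbers `c_i^*(v)`, `a_i^*(v)`, `b_i^*(v)` do not depend on the
choice of `v ∈ Γ_i(u)`. -/
def IsPDRAround {V : Type*} [Fintype V] [DecidableEq V] (G : SimpleGraph V)
    [DecidableRel G.Adj] (alpha : V → ℝ) (u : V) : Prop :=
  ∀ i : ℕ, ∀ v v' : V, G.dist u v = i → G.dist u v' = i →
    ((1 / alpha v) * ∑ w ∈ sphere G u (i - 1) ∩ G.neighborFinset v, alpha w
        = (1 / alpha v') * ∑ w ∈ sphere G u (i - 1) ∩ G.neighborFinset v', alpha w) ∧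
    ((1 / alpha v) * ∑ w ∈ sphere G u i ∩ G.neighborFinset v, alpha w
        = (1 / alpha v') * ∑ w ∈ sphere G u i ∩ G.neighborFinset v', alpha w) ∧
    ((1 / alpha v) * ∑ w ∈ sphere G u (i + 1) ∩ G.neighborFinset v, alpha w
        = (1 / alpha v') * ∑ w ∈ sphere G u (i + 1) ∩ G.neighborFinset v', alpha w)

/-- A linear map that kills `p 0, …, p (k - 1)`, where `p i` has degree `i`, kills every polynomial
of degree less than `k`. -/
theorem map_eq_zero_of_degree_lt {M : Type*} [AddCommGroup M] [Module ℝ M]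
    (L : ℝ[X] →ₗ[ℝ] M) (p : ℕ → ℝ[X]) (k : ℕ)
    (hdeg : ∀ i < k, (p i).degree = (i : WithBot ℕ)) (hL : ∀ i < k, L (p i) = 0)
    (f : ℝ[X]) (hf : f.degree < k) : L f = 0 := by
  induction k generalizing f with
  | zero =>
    have : f = 0 := by
      rw [← Polynomial.degree_eq_bot]
      simpa using hf
    simp [this]
  | succ k ih =>
    have hpk := hdeg k k.lt_succ_self
    have hlead : (p k).coeff k ≠ 0 := Polynomial.coeff_ne_zero_of_eq_degree hpk
    have hsub : (f - (f.coeff k / (p k).coeff k) • p k).degree < k := by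
      rw [Polynomial.degree_lt_iff_coeff_zero] at hf ⊢
      intro m hm
      rcases hm.eq_or_lt with rfl | hm
      · simp [hlead]
      · have hp0 : (p k).coeff m = 0 :=
          Polynomial.coeff_eq_zero_of_degree_lt (by rw [hpk]; exact_mod_cast hm)
        simp [hf m hm, hp0]
    have h := ih (fun i hi => hdeg i (by omega)) (fun i hi => hL i (by omega)) _ hsub
    simpa [hL k k.lt_succ_self] using h

section LocalVector

variable {V : Type*} [Fintype V] [DecidableEq V]

/-- The linear map `f ↦ f(A) e_u`. -/
noncomputable def localVec (A : Matrix V V ℝ) (u : V) : ℝ[X] →ₗ[ℝ] (V → ℝ) where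
  toFun f := aeval A f *ᵥ Pi.single u 1
  map_add' f g := by rw [map_add, Matrix.add_mulVec]
  map_smul' c f := by rw [map_smul, Matrix.smul_mulVec, RingHom.id_apply]

theorem localVec_apply (A : Matrix V V ℝ) (u : V) (f : ℝ[X]) :
    localVec A u f = aeval A f *ᵥ Pi.single u 1 := rfl

theorem localVec_apply_apply (A : Matrix V V ℝ) (u v : V) (f : ℝ[X]) :
    localVec A u f v = aeval A f v u := by
  simp [localVec_apply]

theorem localVec_X_mul (A : Matrix V V ℝ) (u : V) (f : ℝ[X]) :
    localVec A u (X * f) = A *ᵥ localVec A u f := by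
  rw [localVec_apply, localVec_apply, Matrix.mulVec_mulVec, map_mul, Polynomial.aeval_X]

theorem adjMatrix_pow_apply_eq_zero (G : SimpleGraph V) [DecidableRel G.Adj] {n : ℕ} {v u : V}
    (h : n < G.dist u v) : (G.adjMatrix ℝ ^ n) v u = 0 := by
  rw [G.adjMatrix_pow_apply_eq_card_walk]
  norm_cast
  rw [Fintype.card_eq_zero_iff]
  refine ⟨fun w => ?_⟩
  have := SimpleGraph.dist_le w.1
  rw [w.2, SimpleGraph.dist_comm] at this
  omega

theorem localVec_eq_zero_of_degree_lt_dist (G : SimpleGraph V) [DecidableRel G.Adj] {u v : V}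
    {f : ℝ[X]} (h : f.degree < G.dist u v) : localVec (G.adjMatrix ℝ) u f v = 0 := by
  rw [localVec_apply_apply, Polynomial.aeval_eq_sum_range, Matrix.sum_apply]
  refine Finset.sum_eq_zero fun i hi => ?_
  by_cases hdist : i < G.dist u v
  · simp [adjMatrix_pow_apply_eq_zero G hdist]
  · rw [Polynomial.degree_lt_iff_coeff_zero] at h
    simp [h i (by omega)]

theorem aeval_mulVec_of_eigenvector {A : Matrix V V ℝ} {μ : ℝ} {x : V → ℝ}
    (h : A *ᵥ x = μ • x) (f : ℝ[X]) : aeval A f *ᵥ x = f.eval μ • x := by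
  induction f using Polynomial.induction_on' with
  | add f g hf hg => simp [Matrix.add_mulVec, hf, hg, add_smul]
  | monomial n a =>
    have hpow : A ^ n *ᵥ x = μ ^ n • x := by
      induction n with
      | zero => simp
      | succ n ih => rw [pow_succ, ← Matrix.mulVec_mulVec, h, Matrix.mulVec_smul, ih, smul_smul,
          pow_succ, mul_comm]
    rw [Polynomial.aeval_monomial, ← Algebra.smul_def, Matrix.smul_mulVec, hpow,
      Polynomial.eval_monomial, smul_smul]

theorem aeval_isSymm {A : Matrix V V ℝ} (hA : A.IsSymm) (f : ℝ[X]) : (aeval A f).IsSymm := by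
  unfold Matrix.IsSymm
  induction f using Polynomial.induction_on' with
  | add f g hf hg => simp [hf, hg]
  | monomial n a =>
    rw [Polynomial.aeval_monomial, ← Algebra.smul_def, Matrix.transpose_smul,
      Matrix.transpose_pow, hA.eq]

theorem localVec_dotProduct_eigenvector {A : Matrix V V ℝ} (hA : A.IsSymm) {μ : ℝ} {x : V → ℝ}
    (h : A *ᵥ x = μ • x) (u : V) (f : ℝ[X]) :
    localVec A u f ⬝ᵥ x = f.eval μ * x u := by
  rw [localVec_apply, dotProduct_comm, Matrix.dotProduct_mulVec, ← Matrix.mulVec_transpose,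
    (aeval_isSymm hA f).eq, aeval_mulVec_of_eigenvector h]
  simp

end LocalVector

theorem idempotent_diag_nonneg {V : Type*} [Fintype V] {d : ℕ} {E : ℕ → Matrix V V ℝ}
    (hsym : ∀ i ≤ d, (E i).IsSymm)
    (hmul : ∀ i ≤ d, ∀ j ≤ d, E i * E j = if i = j then E i else 0) {i : ℕ} (hi : i ≤ d) (u : V) :
    0 ≤ E i u u := by
  have h := hmul i hi i hi
  rw [if_pos rfl] at h
  rw [← h, Matrix.mul_apply]
  refine Finset.sum_nonneg fun v _ => ?_
  rw [(hsym i hi).apply]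
  exact mul_self_nonneg _

section Spectral

variable {V : Type*} [Fintype V] [DecidableEq V] {A : Matrix V V ℝ} {d : ℕ} {lam : ℕ → ℝ}
  {E : ℕ → Matrix V V ℝ}

theorem aeval_eq_sum_idempotents (hsum : ∑ i ∈ Finset.range (d + 1), E i = 1)
    (heig : ∀ i ≤ d, A * E i = lam i • E i) (f : ℝ[X]) :
    aeval A f = ∑ i ∈ Finset.range (d + 1), f.eval (lam i) • E i := by
  have key : ∀ i ≤ d, aeval A f * E i = f.eval (lam i) • E i := by
    intro i hi
    ext v w
    have hcol : A *ᵥ (E i).col w = lam i • (E i).col w := by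
      ext x
      have := congrFun (congrFun (heig i hi) x) w
      simpa [Matrix.mul_apply, Matrix.mulVec, dotProduct] using this
    have := congrFun (aeval_mulVec_of_eigenvector hcol f) v
    simpa [Matrix.mul_apply, Matrix.mulVec, dotProduct] using this
  rw [← mul_one (aeval A f), ← hsum, Finset.mul_sum]
  exact Finset.sum_congr rfl fun i hi => key i (by simpa [Nat.lt_succ_iff] using hi)

theorem localVec_dotProduct (hA : A.IsSymm) (hsum : ∑ i ∈ Finset.range (d + 1), E i = 1)
    (heig : ∀ i ≤ d, A * E i = lam i • E i) (u : V) (f g : ℝ[X]) :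
    localVec A u f ⬝ᵥ localVec A u g
      = discInner (Finset.range (d + 1)) lam (fun i => E i u u) f g := by
  have h : localVec A u f ⬝ᵥ localVec A u g = aeval A (f * g) u u := by
    rw [map_mul, Matrix.mul_apply, dotProduct]
    refine Finset.sum_congr rfl fun v _ => ?_
    rw [localVec_apply_apply, localVec_apply_apply, (aeval_isSymm hA f).apply]
  rw [h, aeval_eq_sum_idempotents hsum heig, Matrix.sum_apply, discInner]
  refine Finset.sum_congr rfl fun i _ => ?_
  simp only [Polynomial.eval_mul, Matrix.smul_apply, smul_eq_mul]
  ring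

theorem localVec_eq_zero_iff (hA : A.IsSymm) (hsum : ∑ i ∈ Finset.range (d + 1), E i = 1)
    (heig : ∀ i ≤ d, A * E i = lam i • E i) (hsym : ∀ i ≤ d, (E i).IsSymm)
    (hmul : ∀ i ≤ d, ∀ j ≤ d, E i * E j = if i = j then E i else 0) (u : V) (f : ℝ[X]) :
    localVec A u f = 0 ↔
      ∀ i ∈ (Finset.range (d + 1)).filter (fun i => E i u u ≠ 0), f.eval (lam i) = 0 := by
  rw [← dotProduct_self_eq_zero, localVec_dotProduct hA hsum heig, discInner,
    Finset.sum_eq_zero_iff_of_nonneg]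
  · simp only [Finset.mem_filter, and_imp, mul_eq_zero, or_assoc, or_self]
    exact forall₂_congr fun i _ => by tauto
  · intro i hi
    rw [mul_assoc]
    exact mul_nonneg
      (idempotent_diag_nonneg hsym hmul (by simpa [Nat.lt_succ_iff] using hi) u)
      (mul_self_nonneg _)

end Spectral

/-- The eigenspace of a positive eigenvector of a connected graph is one-dimensional. -/
theorem exists_eq_smul_of_pos_eigenvector {V : Type*} [Fintype V] [DecidableEq V]
    (G : SimpleGraph V) [DecidableRel G.Adj] (hconn : G.Connected) {μ : ℝ} {α x : V → ℝ}
    (hpos : ∀ v, 0 < α v) (hα : G.adjMatrix ℝ *ᵥ α = μ • α) (hx : G.adjMatrix ℝ *ᵥ x = μ • x) :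
    ∃ c : ℝ, x = c • α := by
  have := hconn.nonempty
  obtain ⟨v₀, hv₀⟩ := Finite.exists_min (fun v => x v / α v)
  set c := x v₀ / α v₀ with hc
  refine ⟨c, ?_⟩
  set y : V → ℝ := x - c • α with hy
  have hynonneg : ∀ v, 0 ≤ y v := fun v => by
    have := (le_div_iff₀ (hpos v)).mp (hv₀ v)
    simpa [hy] using this
  have hyeig : G.adjMatrix ℝ *ᵥ y = μ • y := by
    rw [hy, Matrix.mulVec_sub, Matrix.mulVec_smul, hα, hx, smul_sub, smul_comm]
  have hy₀ : y v₀ = 0 := by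
    have := (hpos v₀).ne'
    simp [hy, hc, this]
  have hstep : ∀ v w, G.Adj v w → y v = 0 → y w = 0 := by
    intro v w hvw hv
    have h := congrFun hyeig v
    rw [SimpleGraph.adjMatrix_mulVec_apply, Pi.smul_apply, hv, smul_zero,
      Finset.sum_eq_zero_iff_of_nonneg fun w _ => hynonneg w] at h
    exact h w (by simpa using hvw)
  have hwalk : ∀ v w, G.Walk v w → y v = 0 → y w = 0 := by
    intro v w p
    induction p with
    | nil => exact id
    | cons h p ih => exact fun h0 => ih (hstep _ _ h h0)
  have : y = 0 := funext fun v => by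
    obtain ⟨p⟩ := hconn.preconnected v₀ v
    exact hwalk _ _ p hy₀
  exact sub_eq_zero.mp this

section LocalSpectrum

variable {V : Type*} [Fintype V] [DecidableEq V] {A : Matrix V V ℝ} {u : V} {s : Finset ℕ}
  {lam : ℕ → ℝ}

theorem exists_degree_lt_localVec_eq
    (hker : ∀ f : ℝ[X], localVec A u f = 0 ↔ ∀ i ∈ s, f.eval (lam i) = 0) (f : ℝ[X]) :
    ∃ g : ℝ[X], g.degree < s.card ∧ localVec A u g = localVec A u f := by
  set M : ℝ[X] := ∏ i ∈ s, (X - C (lam i)) with hM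
  have hmonic : M.Monic := Polynomial.monic_prod_of_monic _ _ fun i _ => Polynomial.monic_X_sub_C _
  have hdeg : M.degree = s.card := by
    rw [hM, Polynomial.degree_prod]
    simp
  refine ⟨f %ₘ M, hdeg ▸ Polynomial.degree_modByMonic_lt f hmonic, ?_⟩
  rw [← sub_eq_zero, ← map_sub, hker]
  intro i hi
  have hroot : M.eval (lam i) = 0 := by
    rw [hM, Polynomial.eval_prod]
    exact Finset.prod_eq_zero hi (by simp)
  have h := congrArg (Polynomial.eval (lam i)) (Polynomial.modByMonic_add_div f M)
  rw [Polynomial.eval_add, Polynomial.eval_mul, hroot] at h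
  rw [Polynomial.eval_sub]
  linarith

theorem eq_zero_of_localVec_eq_zero
    (hker : ∀ f : ℝ[X], localVec A u f = 0 ↔ ∀ i ∈ s, f.eval (lam i) = 0)
    (hinj : Set.InjOn lam s) {f : ℝ[X]} (hf : f.degree < s.card) (h : localVec A u f = 0) :
    f = 0 :=
  Polynomial.eq_zero_of_degree_lt_of_eval_index_eq_zero _ hinj hf ((hker f).mp h)

theorem exists_localVec_eq_eigenvector {G : SimpleGraph V} [DecidableRel G.Adj]
    (hconn : G.Connected)
    (hker : ∀ f : ℝ[X], localVec (G.adjMatrix ℝ) u f = 0 ↔ ∀ i ∈ s, f.eval (lam i) = 0)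
    (hne : ∀ i ∈ s, i ≠ 0 → lam i ≠ lam 0) {α : V → ℝ} (hpos : ∀ v, 0 < α v)
    (hα : G.adjMatrix ℝ *ᵥ α = lam 0 • α) :
    ∃ f : ℝ[X], localVec (G.adjMatrix ℝ) u f = α := by
  set f : ℝ[X] := ∏ i ∈ s.erase 0, (X - C (lam i)) with hf
  have hf0 : f.eval (lam 0) ≠ 0 := by
    rw [hf, Polynomial.eval_prod, Finset.prod_ne_zero_iff]
    intro i hi
    rw [Finset.mem_erase] at hi
    simpa [sub_eq_zero] using (hne i hi.2 hi.1).symm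
  have heig : G.adjMatrix ℝ *ᵥ localVec (G.adjMatrix ℝ) u f
      = lam 0 • localVec (G.adjMatrix ℝ) u f := by
    rw [← localVec_X_mul, ← map_smul, ← sub_eq_zero, ← map_sub, hker]
    intro i hi
    by_cases h0 : i = 0
    · simp [h0]
    · have : f.eval (lam i) = 0 := by
        rw [hf, Polynomial.eval_prod]
        exact Finset.prod_eq_zero (Finset.mem_erase.mpr ⟨h0, hi⟩) (by simp)
      simp [this]
  obtain ⟨c, hc⟩ := exists_eq_smul_of_pos_eigenvector G hconn hpos hα heig
  have hc0 : c ≠ 0 := by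
    rintro rfl
    have h := localVec_dotProduct_eigenvector G.isSymm_adjMatrix hα u f
    rw [hc, zero_smul, zero_dotProduct] at h
    exact mul_ne_zero hf0 (hpos u).ne' h.symm
  exact ⟨c⁻¹ • f, by rw [map_smul, hc, smul_smul, inv_mul_cancel₀ hc0, one_smul]⟩

end LocalSpectrum

section Predistance

variable {V : Type*} [Fintype V] [DecidableEq V]

/-- The sum of the first `k` local predistance polynomials represents evaluation at `μ` on
polynomials of degree less than `k`. -/
theorem localVec_dotProduct_sum {A : Matrix V V ℝ} {u : V} {μ : ℝ} {p : ℕ → ℝ[X]} {k : ℕ}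
    (hdeg : ∀ i < k, (p i).degree = (i : WithBot ℕ))
    (horth : ∀ i < k, ∀ j < k, i ≠ j → localVec A u (p i) ⬝ᵥ localVec A u (p j) = 0)
    (hnorm : ∀ i < k, localVec A u (p i) ⬝ᵥ localVec A u (p i) = (p i).eval μ)
    {f : ℝ[X]} (hf : f.degree < k) :
    localVec A u f ⬝ᵥ localVec A u (∑ i ∈ Finset.range k, p i) = f.eval μ := by
  let L : ℝ[X] →ₗ[ℝ] ℝ :=
    { toFun := fun f => localVec A u f ⬝ᵥ localVec A u (∑ i ∈ Finset.range k, p i) - f.eval μ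
      map_add' := fun f g => by
        simp only [map_add, add_dotProduct, Polynomial.eval_add]
        ring
      map_smul' := fun c f => by
        simp only [map_smul, smul_dotProduct, Polynomial.eval_smul, smul_eq_mul, RingHom.id_apply]
        ring }
  refine sub_eq_zero.mp (map_eq_zero_of_degree_lt L p k hdeg (fun i hi => ?_) f hf)
  change localVec A u (p i) ⬝ᵥ localVec A u (∑ i ∈ Finset.range k, p i) - (p i).eval μ = 0
  rw [map_sum, dotProduct_sum, Finset.sum_eq_single_of_mem i (Finset.mem_range.mpr hi), hnorm i hi,
    sub_self]
  exact fun j hj hji => horth i hi j (Finset.mem_range.mp hj) hji.symm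

theorem degree_sum_range_lt {p : ℕ → ℝ[X]} {k : ℕ}
    (hdeg : ∀ i < k, (p i).degree = (i : WithBot ℕ)) :
    (∑ i ∈ Finset.range k, p i).degree < k := by
  rw [← Polynomial.mem_degreeLT]
  refine Submodule.sum_mem _ fun i hi => ?_
  rw [Polynomial.mem_degreeLT, hdeg i (Finset.mem_range.mp hi)]
  exact_mod_cast Finset.mem_range.mp hi

theorem exists_localVec_eq_sum {A : Matrix V V ℝ} {u : V} {p : ℕ → ℝ[X]} {k : ℕ}
    (hdeg : ∀ i < k, (p i).degree = (i : WithBot ℕ)) {f : ℝ[X]} (hf : f.degree < k) :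
    ∃ c : ℕ → ℝ, localVec A u f = ∑ i ∈ Finset.range k, c i • localVec A u (p i) := by
  have h := map_eq_zero_of_degree_lt (Submodule.mkQ (Submodule.span ℝ (Set.range
    fun i : Fin k => localVec A u (p i))) ∘ₗ localVec A u) p k hdeg (fun i hi => by
      rw [LinearMap.comp_apply, Submodule.mkQ_apply, Submodule.Quotient.mk_eq_zero]
      exact Submodule.subset_span ⟨⟨i, hi⟩, rfl⟩) f hf
  rw [LinearMap.comp_apply, Submodule.mkQ_apply, Submodule.Quotient.mk_eq_zero,
    Submodule.mem_span_range_iff_exists_fun] at h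
  obtain ⟨c, hc⟩ := h
  refine ⟨fun i => if hi : i < k then c ⟨i, hi⟩ else 0, ?_⟩
  rw [← hc, Finset.sum_range]
  simp

/-- The sum of the first `k` local predistance vectors is the only local vector of degree less than
`k` that is proportional to `α` on the ball of vertices at distance less than `k`. -/
theorem localVec_sum_eq {G : SimpleGraph V} [DecidableRel G.Adj] {u : V} {μ : ℝ} {p : ℕ → ℝ[X]}
    {k : ℕ} (hdeg : ∀ i < k, (p i).degree = (i : WithBot ℕ))
    (horth : ∀ i < k, ∀ j < k, i ≠ j →
      localVec (G.adjMatrix ℝ) u (p i) ⬝ᵥ localVec (G.adjMatrix ℝ) u (p j) = 0)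
    (hnorm : ∀ i < k,
      localVec (G.adjMatrix ℝ) u (p i) ⬝ᵥ localVec (G.adjMatrix ℝ) u (p i) = (p i).eval μ)
    {α : V → ℝ} (hpos : ∀ v, 0 < α v) (hα : G.adjMatrix ℝ *ᵥ α = μ • α)
    {g : ℝ[X]} (hg : g.degree < k)
    (hball : ∀ v, G.dist u v < k → localVec (G.adjMatrix ℝ) u g v = (α u)⁻¹ * α v) :
    localVec (G.adjMatrix ℝ) u (∑ i ∈ Finset.range k, p i) = localVec (G.adjMatrix ℝ) u g := by
  set q := ∑ i ∈ Finset.range k, p i with hq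
  have hdiff : (q - g).degree < k :=
    (Polynomial.degree_sub_le _ _).trans_lt (max_lt (degree_sum_range_lt hdeg) hg)
  have h1 := localVec_dotProduct_sum hdeg horth hnorm hdiff
  have h2 : localVec (G.adjMatrix ℝ) u (q - g) ⬝ᵥ localVec (G.adjMatrix ℝ) u g
      = localVec (G.adjMatrix ℝ) u (q - g) ⬝ᵥ ((α u)⁻¹ • α) := by
    refine Finset.sum_congr rfl fun v _ => ?_
    by_cases hv : G.dist u v < k
    · rw [hball v hv, Pi.smul_apply, smul_eq_mul]
    · rw [localVec_eq_zero_of_degree_lt_dist G (hdiff.trans_le (by exact_mod_cast not_lt.mp hv)),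
        zero_mul, zero_mul]
  rw [dotProduct_smul, localVec_dotProduct_eigenvector G.isSymm_adjMatrix hα, smul_eq_mul,
    mul_comm _ (α u), inv_mul_cancel_left₀ (hpos u).ne'] at h2
  rw [← sub_eq_zero, ← map_sub, ← dotProduct_self_eq_zero]
  conv_lhs => rw [map_sub _ q g, dotProduct_sub]
  rw [← map_sub, h1, h2, sub_self]

end Predistance

section PseudoDistanceRegular

variable {V : Type*} {G : SimpleGraph V} {α : V → ℝ} {u : V}

/-- The restriction of `α` to the vertices at distance `i` from `u`. -/
noncomputable def sphereVec (G : SimpleGraph V) (α : V → ℝ) (u : V) (i : ℕ) :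
    V → ℝ :=
  fun v => if G.dist u v = i then α v else 0

/-- Every vertex at distance `i + 1` from `u` has a neighbour at distance `i`. -/
theorem exists_adj_dist_eq (hconn : G.Connected) {i : ℕ} {v : V} (hv : G.dist u v = i + 1) :
    ∃ w, G.Adj v w ∧ G.dist u w = i := by
  obtain ⟨q, hq⟩ := hconn.exists_walk_length_eq_dist v u
  rw [SimpleGraph.dist_comm, hv] at hq
  cases q with
  | nil => simp at hq
  | @cons _ w _ hvw q =>
    refine ⟨w, hvw, ?_⟩
    rw [SimpleGraph.Walk.length_cons] at hq
    have h1 := SimpleGraph.dist_le q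
    have h2 := hconn.dist_triangle (u := u) (v := w) (w := v)
    rw [SimpleGraph.dist_eq_one_iff_adj.mpr hvw.symm] at h2
    rw [SimpleGraph.dist_comm] at h1
    omega

variable [Fintype V] [DecidableRel G.Adj]

theorem adjMatrix_mulVec_sphereVec_eq_zero (hconn : G.Connected) {i : ℕ} {v : V}
    (h : G.dist u v + 1 < i ∨ i + 1 < G.dist u v) :
    (G.adjMatrix ℝ *ᵥ sphereVec G α u i) v = 0 := by
  rw [SimpleGraph.adjMatrix_mulVec_apply]
  refine Finset.sum_eq_zero fun w hw => if_neg ?_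
  rw [SimpleGraph.mem_neighborFinset] at hw
  have h1 := hconn.dist_triangle (u := u) (v := v) (w := w)
  have h2 := hconn.dist_triangle (u := u) (v := w) (w := v)
  rw [SimpleGraph.dist_eq_one_iff_adj.mpr hw] at h1
  rw [SimpleGraph.dist_eq_one_iff_adj.mpr hw.symm] at h2
  omega

variable [DecidableEq V]

theorem adjMatrix_mulVec_sphereVec (i : ℕ) (v : V) :
    (G.adjMatrix ℝ *ᵥ sphereVec G α u i) v = ∑ w ∈ sphere G u i ∩ G.neighborFinset v, α w := by
  rw [SimpleGraph.adjMatrix_mulVec_apply, Finset.inter_comm, sphere, Finset.inter_filter,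
    Finset.inter_univ, Finset.sum_filter]
  rfl

theorem adjMatrix_mulVec_sphereVec_pos (hpos : ∀ v, 0 < α v) {i : ℕ} {v w : V}
    (hvw : G.Adj v w) (hw : G.dist u w = i) :
    0 < (G.adjMatrix ℝ *ᵥ sphereVec G α u i) v := by
  rw [adjMatrix_mulVec_sphereVec]
  exact Finset.sum_pos (fun w _ => hpos w) ⟨w, by simp [sphere, hw, hvw]⟩

/-- Pseudo-distance-regularity says that the vectors `x` with `x v / α v` depending only on the
distance from `u` to `v` form a space invariant under the adjacency matrix. -/
theorem isPDRAround_iff (hconn : G.Connected) (hpos : ∀ v, 0 < α v) :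
    IsPDRAround G α u ↔ ∀ i, ∃ c : ℕ → ℝ, ∀ v,
      (G.adjMatrix ℝ *ᵥ sphereVec G α u i) v = c (G.dist u v) * α v := by
  simp only [IsPDRAround, ← adjMatrix_mulVec_sphereVec]
  constructor
  · intro h i
    have hconst : ∀ v v', G.dist u v = G.dist u v' →
        1 / α v * (G.adjMatrix ℝ *ᵥ sphereVec G α u i) v
          = 1 / α v' * (G.adjMatrix ℝ *ᵥ sphereVec G α u i) v' := by
      intro v v' hvv'
      obtain ⟨hc, ha, hb⟩ := h _ v v' rfl hvv'.symm
      by_cases hfar : G.dist u v + 1 < i ∨ i + 1 < G.dist u v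
      · rw [adjMatrix_mulVec_sphereVec_eq_zero hconn hfar,
          adjMatrix_mulVec_sphereVec_eq_zero hconn (hvv' ▸ hfar), mul_zero, mul_zero]
      · obtain rfl | rfl | rfl :
            i = G.dist u v - 1 ∨ i = G.dist u v ∨ i = G.dist u v + 1 := by omega
        exacts [hc, ha, hb]
    classical
    refine ⟨fun j => if hj : ∃ v, G.dist u v = j then
      1 / α hj.choose * (G.adjMatrix ℝ *ᵥ sphereVec G α u i) hj.choose else 0, fun v => ?_⟩
    have hj : ∃ w, G.dist u w = G.dist u v := ⟨v, rfl⟩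
    beta_reduce
    rw [dif_pos hj, hconst _ v hj.choose_spec]
    have := (hpos v).ne'
    field_simp
  · intro h i v v' hv hv'
    have hconst : ∀ j, 1 / α v * (G.adjMatrix ℝ *ᵥ sphereVec G α u j) v
        = 1 / α v' * (G.adjMatrix ℝ *ᵥ sphereVec G α u j) v' := by
      intro j
      obtain ⟨c, hc⟩ := h j
      have h1 := (hpos v).ne'
      have h2 := (hpos v').ne'
      rw [hc, hc, hv, hv']
      field_simp
    exact ⟨hconst _, hconst _, hconst _⟩

/-- Around a vertex where `G` is pseudo-distance-regular, the restriction of `α` to the sphere of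
radius `i` is a local vector of degree at most `i`. -/
theorem exists_localVec_eq_sphereVec (hconn : G.Connected) (hpos : ∀ v, 0 < α v)
    (h : IsPDRAround G α u) (i : ℕ) :
    ∃ f : ℝ[X], f.degree < (i + 1 : ℕ) ∧
      localVec (G.adjMatrix ℝ) u f = sphereVec G α u i := by
  rw [isPDRAround_iff hconn hpos] at h
  induction i using Nat.strong_induction_on with
  | _ i ih =>
    cases i with
    | zero =>
      refine ⟨C (α u), Polynomial.degree_C_le.trans_lt (by simp), ?_⟩
      ext v
      by_cases hv : u = v
      · simp [localVec_apply_apply, sphereVec, ← hv, Matrix.algebraMap_matrix_apply]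
      · have hd : G.dist u v ≠ 0 := fun h0 => hv (hconn.dist_eq_zero_iff.mp h0)
        simp [localVec_apply_apply, sphereVec, hd, Matrix.algebraMap_matrix_apply, Ne.symm hv]
    | succ i =>
      obtain ⟨c, hc⟩ := h i
      choose! F hFdeg hF using ih
      by_cases hne : ∃ v, G.dist u v = i + 1
      · obtain ⟨v, hv⟩ := hne
        obtain ⟨w, hvw, hw⟩ := exists_adj_dist_eq hconn hv
        have hci : c (i + 1) ≠ 0 := by
          intro h0
          have := adjMatrix_mulVec_sphereVec_pos hpos hvw hw
          rw [hc v, hv, h0, zero_mul] at this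
          exact this.false
        refine ⟨(c (i + 1))⁻¹ • (X * F i - ∑ j ∈ Finset.range (i + 1), c j • F j), ?_, ?_⟩
        · rw [← Polynomial.mem_degreeLT]
          refine Submodule.smul_mem _ _ (Submodule.sub_mem _ ?_ (Submodule.sum_mem _ fun j hj =>
            Submodule.smul_mem _ _ ?_))
          · have := hFdeg i i.lt_succ_self
            rw [Polynomial.mem_degreeLT]
            rw [Polynomial.degree_lt_iff_coeff_zero] at this ⊢
            intro m hm
            obtain ⟨m, rfl⟩ : ∃ m', m = m' + 1 := ⟨m - 1, by omega⟩
            rw [Polynomial.coeff_X_mul]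
            exact this m (by omega)
          · have hj := Finset.mem_range.mp hj
            rw [Polynomial.mem_degreeLT]
            exact (hFdeg j hj).trans (by exact_mod_cast Nat.succ_lt_succ hj)
        · have hexp : G.adjMatrix ℝ *ᵥ sphereVec G α u i
              = ∑ j ∈ Finset.range (i + 2), c j • sphereVec G α u j := by
            ext v
            simp only [Finset.sum_apply, Pi.smul_apply, smul_eq_mul, sphereVec, mul_ite, mul_zero,
              Finset.sum_ite_eq, Finset.mem_range]
            split_ifs with hv
            · exact hc v
            · exact adjMatrix_mulVec_sphereVec_eq_zero hconn (Or.inr (by omega))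
          rw [map_smul, map_sub, localVec_X_mul, hF i i.lt_succ_self, map_sum, hexp,
            Finset.sum_range_succ, inv_smul_eq_iff₀ hci, sub_eq_iff_eq_add', add_left_inj]
          refine Finset.sum_congr rfl fun j hj => ?_
          rw [map_smul, hF j (Finset.mem_range.mp hj)]
      · refine ⟨0, by simp, ?_⟩
        ext v
        rw [map_zero, sphereVec, if_neg fun h0 => hne ⟨v, h0⟩, Pi.zero_apply]

theorem exists_adjMatrix_mulVec_localVec_eq_sum {p : ℕ → ℝ[X]} {N : ℕ}
    (hdeg : ∀ i ≤ N, (p i).degree = (i : WithBot ℕ))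
    (horth : ∀ i ≤ N, ∀ j ≤ N, i ≠ j →
      localVec (G.adjMatrix ℝ) u (p i) ⬝ᵥ localVec (G.adjMatrix ℝ) u (p j) = 0)
    (hne : ∀ i ≤ N, localVec (G.adjMatrix ℝ) u (p i) ≠ 0)
    (hred : ∀ f : ℝ[X], ∃ g : ℝ[X], g.degree < (N + 1 : ℕ) ∧
      localVec (G.adjMatrix ℝ) u g = localVec (G.adjMatrix ℝ) u f) {i : ℕ} (hi : i ≤ N) :
    ∃ c : ℕ → ℝ, G.adjMatrix ℝ *ᵥ localVec (G.adjMatrix ℝ) u (p i)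
        = ∑ j ∈ Finset.range (N + 1), c j • localVec (G.adjMatrix ℝ) u (p j) ∧
      ∀ j, j + 1 < i → c j = 0 := by
  obtain ⟨g, hg, hgf⟩ := hred (X * p i)
  obtain ⟨c, hc⟩ := exists_localVec_eq_sum (A := G.adjMatrix ℝ) (u := u) (p := p)
    (fun i hi => hdeg i (Nat.lt_succ_iff.mp hi)) hg
  rw [hgf, localVec_X_mul] at hc
  refine ⟨c, hc, fun j hj => ?_⟩
  have hlow : ∀ f : ℝ[X], f.degree < i →
      localVec (G.adjMatrix ℝ) u (p i) ⬝ᵥ localVec (G.adjMatrix ℝ) u f = 0 := by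
    intro f hf
    exact map_eq_zero_of_degree_lt
      (dotProductBilin ℝ ℝ (localVec (G.adjMatrix ℝ) u (p i)) ∘ₗ localVec (G.adjMatrix ℝ) u)
      p i (fun k hk => hdeg k (by omega)) (fun k hk => horth i hi k (by omega) (by omega)) f hf
  have hzero : localVec (G.adjMatrix ℝ) u (p j)
      ⬝ᵥ (G.adjMatrix ℝ *ᵥ localVec (G.adjMatrix ℝ) u (p i)) = 0 := by
    rw [Matrix.dotProduct_mulVec, ← Matrix.mulVec_transpose, G.isSymm_adjMatrix.eq,
      ← localVec_X_mul, dotProduct_comm]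
    refine hlow _ ?_
    rw [Polynomial.degree_mul, Polynomial.degree_X, hdeg j (by omega)]
    exact_mod_cast (by omega : 1 + j < i)
  rw [hc, dotProduct_sum, Finset.sum_eq_single_of_mem j (Finset.mem_range.mpr (by omega)),
    dotProduct_smul, smul_eq_mul] at hzero
  · exact (mul_eq_zero.mp hzero).resolve_right
      fun h => hne j (by omega) (dotProduct_self_eq_zero.mp h)
  · intro k hk hkj
    rw [dotProduct_smul, horth j (by omega) k (Nat.lt_succ_iff.mp (Finset.mem_range.mp hk)) hkj.symm,
      smul_zero]

/-- If the last local predistance vector is supported on the last sphere, then every local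
predistance vector is the restriction of `α / α u` to the corresponding sphere. -/
theorem localVec_eq_sphereVec_of_top {p : ℕ → ℝ[X]} {N : ℕ} (hconn : G.Connected)
    (hpos : ∀ v, 0 < α v) (hdeg : ∀ i ≤ N, (p i).degree = (i : WithBot ℕ))
    (horth : ∀ i ≤ N, ∀ j ≤ N, i ≠ j →
      localVec (G.adjMatrix ℝ) u (p i) ⬝ᵥ localVec (G.adjMatrix ℝ) u (p j) = 0)
    (hne : ∀ i ≤ N, localVec (G.adjMatrix ℝ) u (p i) ≠ 0)
    (hred : ∀ f : ℝ[X], ∃ g : ℝ[X], g.degree < (N + 1 : ℕ) ∧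
      localVec (G.adjMatrix ℝ) u g = localVec (G.adjMatrix ℝ) u f)
    (hall : localVec (G.adjMatrix ℝ) u (∑ i ∈ Finset.range (N + 1), p i) = (α u)⁻¹ • α)
    (htop : localVec (G.adjMatrix ℝ) u (p N) = (α u)⁻¹ • sphereVec G α u N)
    {k : ℕ} (hk : k ≤ N) :
    localVec (G.adjMatrix ℝ) u (p k) = (α u)⁻¹ • sphereVec G α u k := by
  induction hm : N - k using Nat.strong_induction_on generalizing k with
  | _ m ih =>
  rcases hk.eq_or_lt with rfl | hkN
  · exact htop
  have habove : ∀ j, k < j → j ≤ N →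
      localVec (G.adjMatrix ℝ) u (p j) = (α u)⁻¹ • sphereVec G α u j :=
    fun j hkj hjN => ih (N - j) (by omega) hjN rfl
  have habove_zero : ∀ j, k < j → j ≤ N → ∀ v, G.dist u v ≤ k →
      localVec (G.adjMatrix ℝ) u (p j) v = 0 := by
    intro j hkj hjN v hv
    rw [habove j hkj hjN, Pi.smul_apply, sphereVec, if_neg (by omega), smul_zero]
  obtain ⟨c, hc, hc0⟩ := exists_adjMatrix_mulVec_localVec_eq_sum hdeg horth hne hred
    (show k + 1 ≤ N from hkN)
  have hball : ∀ v, G.dist u v ≤ k → (α u)⁻¹ * (G.adjMatrix ℝ *ᵥ sphereVec G α u (k + 1)) v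
      = c k * localVec (G.adjMatrix ℝ) u (p k) v := by
    intro v hv
    have h := congrFun hc v
    rw [habove (k + 1) k.lt_succ_self hkN, Matrix.mulVec_smul, Finset.sum_apply,
      Finset.sum_eq_single_of_mem k (Finset.mem_range.mpr (by omega))] at h
    · simpa using h
    · intro j hj hjk
      rcases hjk.lt_or_gt with hjk | hjk
      · rw [hc0 j (by omega), zero_smul, Pi.zero_apply]
      · rw [Pi.smul_apply, habove_zero j hjk (by simpa [Nat.lt_succ_iff] using hj) v hv, smul_zero]
  have hck : c k ≠ 0 := by
    intro h0
    obtain ⟨v, hv⟩ := Function.ne_iff.mp (hne (k + 1) hkN)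
    have hdist : G.dist u v = k + 1 := by
      by_contra hd
      rw [habove (k + 1) k.lt_succ_self hkN, Pi.smul_apply, sphereVec, if_neg hd] at hv
      simp at hv
    obtain ⟨w, hvw, hw⟩ := exists_adj_dist_eq hconn hdist
    have h := hball w hw.le
    rw [h0, zero_mul] at h
    exact (mul_pos (inv_pos.mpr (hpos u))
      (adjMatrix_mulVec_sphereVec_pos hpos hvw.symm hdist)).ne' h
  ext v
  rw [Pi.smul_apply, sphereVec]
  rcases lt_trichotomy (G.dist u v) k with hv | hv | hv
  · have h := hball v hv.le
    rw [adjMatrix_mulVec_sphereVec_eq_zero hconn (Or.inl (by omega)), mul_zero] at h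
    rw [if_neg hv.ne, smul_zero]
    exact (mul_eq_zero.mp h.symm).resolve_left hck
  · have h := congrFun hall v
    rw [map_sum, Finset.sum_apply,
      Finset.sum_eq_single_of_mem k (Finset.mem_range.mpr (by omega))] at h
    · rw [if_pos hv, h, Pi.smul_apply]
    · intro j hj hjk
      rcases hjk.lt_or_gt with hjk | hjk
      · refine localVec_eq_zero_of_degree_lt_dist G ?_
        rw [hdeg j (by omega)]
        exact_mod_cast hv ▸ hjk
      · exact habove_zero j hjk (by simpa [Nat.lt_succ_iff] using hj) v hv.le
  · rw [if_neg hv.ne', smul_zero]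
    refine localVec_eq_zero_of_degree_lt_dist G ?_
    rw [hdeg k hk]
    exact_mod_cast hv

theorem isPDRAround_of_localVec_eq_sphereVec {p : ℕ → ℝ[X]} {N : ℕ} (hconn : G.Connected)
    (hpos : ∀ v, 0 < α v) (hdeg : ∀ i ≤ N, (p i).degree = (i : WithBot ℕ))
    (hred : ∀ f : ℝ[X], ∃ g : ℝ[X], g.degree < (N + 1 : ℕ) ∧
      localVec (G.adjMatrix ℝ) u g = localVec (G.adjMatrix ℝ) u f)
    (hecc : ∀ v, G.dist u v ≤ N)
    (hp : ∀ k ≤ N, localVec (G.adjMatrix ℝ) u (p k) = (α u)⁻¹ • sphereVec G α u k) :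
    IsPDRAround G α u := by
  rw [isPDRAround_iff hconn hpos]
  intro i
  by_cases hi : i ≤ N
  · obtain ⟨g, hg, hgf⟩ := hred (X * p i)
    obtain ⟨c, hc⟩ := exists_localVec_eq_sum (A := G.adjMatrix ℝ) (u := u) (p := p)
      (fun i hi => hdeg i (Nat.lt_succ_iff.mp hi)) hg
    rw [hgf, localVec_X_mul, hp i hi, Matrix.mulVec_smul] at hc
    refine ⟨c, fun v => ?_⟩
    have h := congrFun hc v
    rw [Finset.sum_apply, Finset.sum_eq_single_of_mem (G.dist u v)
      (Finset.mem_range.mpr (Nat.lt_succ_iff.mpr (hecc v))), Pi.smul_apply, Pi.smul_apply,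
      hp _ (hecc v), Pi.smul_apply, sphereVec, if_pos rfl, smul_comm (c _)] at h
    · exact smul_right_injective _ (inv_ne_zero (hpos u).ne') h
    · intro j hj hjv
      rw [Pi.smul_apply, hp j (by simpa [Nat.lt_succ_iff] using hj), Pi.smul_apply, sphereVec,
        if_neg hjv.symm, smul_zero, smul_zero]
  · refine ⟨0, fun v => ?_⟩
    have : sphereVec G α u i = 0 := funext fun v => if_neg (by have := hecc v; omega)
    rw [this, Matrix.mulVec_zero, Pi.zero_apply, Pi.zero_apply, zero_mul]

/-- Equality case of the Cauchy–Schwarz bound `f(μ) / ‖f‖ ≤ ‖ρ‖ / α u` for the vector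
`x = f(A) e_u` supported in a ball, when `f` represents evaluation at `μ`. -/
theorem div_sqrt_eq_iff_eq_ball {x : V → ℝ} {s : Finset V} (hpos : ∀ v, 0 < α v)
    (hsupp : ∀ v, v ∉ s → x v = 0) (hx : x ⬝ᵥ α = (x ⬝ᵥ x) * α u) :
    (x ⬝ᵥ x) / √(x ⬝ᵥ x) = 1 / α u * √(∑ v ∈ s, α v ^ 2) ↔
      ∀ v ∈ s, x v = (α u)⁻¹ * α v := by
  set r : V → ℝ := fun v => if v ∈ s then (α u)⁻¹ * α v else 0 with hr
  have hu := hpos u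
  have hxr : x ⬝ᵥ r = x ⬝ᵥ x := by
    have : x ⬝ᵥ r = x ⬝ᵥ ((α u)⁻¹ • α) := by
      refine Finset.sum_congr rfl fun v _ => ?_
      by_cases hv : v ∈ s
      · simp [hr, hv]
      · simp [hsupp v hv]
    rw [this, dotProduct_smul, hx, smul_eq_mul]
    field_simp
  have hrr : r ⬝ᵥ r = (1 / α u) ^ 2 * ∑ v ∈ s, α v ^ 2 := by
    rw [dotProduct, Finset.mul_sum, ← Finset.sum_subset (Finset.subset_univ s)
      fun v _ hv => by simp [hr, hv]]
    refine Finset.sum_congr rfl fun v hv => ?_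
    simp only [hr, if_pos hv]
    ring
  have hsub : (x - r) ⬝ᵥ (x - r) = r ⬝ᵥ r - x ⬝ᵥ x := by
    rw [dotProduct_sub, sub_dotProduct, sub_dotProduct, dotProduct_comm r x, hxr]
    ring
  have hx0 : 0 ≤ x ⬝ᵥ x := Finset.sum_nonneg fun v _ => mul_self_nonneg _
  have hr0 : 0 ≤ r ⬝ᵥ r := Finset.sum_nonneg fun v _ => mul_self_nonneg _
  have hsqrt : 1 / α u * √(∑ v ∈ s, α v ^ 2) = √(r ⬝ᵥ r) := by
    rw [hrr, Real.sqrt_mul (sq_nonneg _), Real.sqrt_sq (by positivity)]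
  rw [Real.div_sqrt, hsqrt, Real.sqrt_inj hx0 hr0, eq_comm, ← sub_eq_zero, ← hsub,
    dotProduct_self_eq_zero, sub_eq_zero, funext_iff]
  refine forall_congr' fun v => ?_
  by_cases hv : v ∈ s
  · simp [hr, hv]
  · simp [hr, hv, hsupp v hv]

end PseudoDistanceRegular

/-- Theorem 2.2 (second part): equality
`q_{d_u−1}^u(λ_0)/‖q_{d_u−1}^u‖_u = (1/α_u)·‖ρ_{N_{d_u−1}(u)}‖` holds if and only if
`u` has maximum eccentricity `ecc(u) = d_u` and `Γ` is pseudo-distance-regular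
around `u`. -/
theorem stmt_9 {V : Type*} [Fintype V] [DecidableEq V]
    (G : SimpleGraph V) [DecidableRel G.Adj] (hconn : G.Connected)
    (d : ℕ) (lam : ℕ → ℝ) (hlam : StrictAntiOn lam (Set.Iic d))
    (E : ℕ → Matrix V V ℝ)
    (hsym : ∀ i ≤ d, (E i).IsSymm)
    (hsum : ∑ i ∈ Finset.range (d + 1), E i = 1)
    (hmul : ∀ i ≤ d, ∀ j ≤ d, E i * E j = if i = j then E i else 0)
    (heig : ∀ i ≤ d, G.adjMatrix ℝ * E i = lam i • E i)
    (hnz : ∀ i ≤ d, E i ≠ 0)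
    (alpha : V → ℝ) (hapos : ∀ v, 0 < alpha v)
    (haeig : G.adjMatrix ℝ *ᵥ alpha = lam 0 • alpha)
    (hanorm : ∑ v : V, alpha v ^ 2 = (Fintype.card V : ℝ))
    (u : V) (du : ℕ) (hdu1 : 1 ≤ du)
    (hdu : ((Finset.range (d + 1)).filter (fun i => E i u u ≠ 0)).card = du + 1)
    (p : ℕ → Polynomial ℝ)
    (hpdeg : ∀ i ≤ du, (p i).degree = (i : WithBot ℕ))
    (hporth : ∀ i ≤ du, ∀ j ≤ du, i ≠ j →
      discInner (Finset.range (d + 1)) lam (fun i => E i u u) (p i) (p j) = 0)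
    (hpnorm : ∀ i ≤ du,
      discInner (Finset.range (d + 1)) lam (fun i => E i u u) (p i) (p i)
        = (p i).eval (lam 0)) :
    ((∑ i ∈ Finset.range du, p i).eval (lam 0) /
        Real.sqrt (discInner (Finset.range (d + 1)) lam (fun i => E i u u)
          (∑ i ∈ Finset.range du, p i) (∑ i ∈ Finset.range du, p i))
      = (1 / alpha u) *
          Real.sqrt (∑ v ∈ Finset.univ.filter (fun v => G.dist u v ≤ du - 1),
            alpha v ^ 2))
    ↔ (Finset.univ.sup (fun v => G.dist u v) = du ∧ IsPDRAround G alpha u) := by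
  set A := G.adjMatrix ℝ with hA
  set loc := (Finset.range (d + 1)).filter (fun i => E i u u ≠ 0) with hloc
  have hAsymm : A.IsSymm := G.isSymm_adjMatrix
  have hloc_le : ∀ i ∈ loc, i ≤ d := fun i hi => by
    simpa [Nat.lt_succ_iff] using (Finset.mem_filter.mp hi).1
  have hker : ∀ f : ℝ[X], localVec A u f = 0 ↔ ∀ i ∈ loc, f.eval (lam i) = 0 :=
    localVec_eq_zero_iff hAsymm hsum heig hsym hmul u
  have hinj : Set.InjOn lam loc := hlam.injOn.mono fun i hi => hloc_le i hi
  have hne0 : ∀ i ∈ loc, i ≠ 0 → lam i ≠ lam 0 := fun i hi h0 =>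
    (hlam (Set.mem_Iic.mpr d.zero_le) (Set.mem_Iic.mpr (hloc_le i hi))
      (Nat.pos_of_ne_zero h0)).ne
  have hred : ∀ f : ℝ[X], ∃ g : ℝ[X], g.degree < (du + 1 : ℕ) ∧
      localVec A u g = localVec A u f := by
    simpa only [hdu] using exists_degree_lt_localVec_eq hker
  have hne : ∀ i ≤ du, localVec A u (p i) ≠ 0 := by
    intro i hi h0
    have hp0 := eq_zero_of_localVec_eq_zero hker hinj
      (by rw [hdu, hpdeg i hi]; exact_mod_cast Nat.lt_succ_of_le hi) h0
    have := hpdeg i hi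
    rw [hp0, Polynomial.degree_zero] at this
    exact WithBot.bot_ne_coe this
  simp only [← localVec_dotProduct hAsymm hsum heig] at hporth hpnorm ⊢
  have hdeg_lt : ∀ k ≤ du + 1, ∀ i < k, (p i).degree = (i : WithBot ℕ) :=
    fun k hk i hi => hpdeg i (by omega)
  have horth_lt : ∀ k ≤ du + 1, ∀ i < k, ∀ j < k, i ≠ j →
      localVec A u (p i) ⬝ᵥ localVec A u (p j) = 0 :=
    fun k hk i hi j hj => hporth i (by omega) j (by omega)
  have hnorm_lt : ∀ k ≤ du + 1, ∀ i < k,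
      localVec A u (p i) ⬝ᵥ localVec A u (p i) = (p i).eval (lam 0) :=
    fun k hk i hi => hpnorm i (by omega)
  have hdu' : du ≤ du + 1 := du.le_succ
  have hqdeg := degree_sum_range_lt (hdeg_lt du hdu')
  have hqq := localVec_dotProduct_sum (hdeg_lt du hdu') (horth_lt du hdu') (hnorm_lt du hdu') hqdeg
  have hball : ∀ v, v ∈ Finset.univ.filter (fun v => G.dist u v ≤ du - 1) ↔ G.dist u v < du := by
    intro v
    rw [Finset.mem_filter]
    constructor
    · rintro ⟨-, h⟩
      omega
    · exact fun h => ⟨Finset.mem_univ v, by omega⟩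
  rw [← hqq, div_sqrt_eq_iff_eq_ball hapos
    (fun v hv => localVec_eq_zero_of_degree_lt_dist G (hqdeg.trans_le
      (by rw [hball] at hv; exact_mod_cast not_lt.mp hv)))
    (by rw [localVec_dotProduct_eigenvector hAsymm haeig, hqq])]
  simp only [hball]
  constructor
  · intro hext
    obtain ⟨f, hf⟩ := exists_localVec_eq_eigenvector hconn hker hne0 hapos haeig
    obtain ⟨g, hg, hgf⟩ := hred ((alpha u)⁻¹ • f)
    rw [map_smul, hf] at hgf
    have hall : localVec A u (∑ i ∈ Finset.range (du + 1), p i) = (alpha u)⁻¹ • alpha := by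
      rw [← hgf]
      exact localVec_sum_eq (hdeg_lt _ le_rfl) (horth_lt _ le_rfl) (hnorm_lt _ le_rfl) hapos haeig hg
        fun v _ => by rw [hgf]; rfl
    have hecc : ∀ v, G.dist u v ≤ du := by
      intro v
      by_contra! hv
      have h := congrFun hgf v
      rw [localVec_eq_zero_of_degree_lt_dist G (hg.trans_le (by exact_mod_cast hv))] at h
      exact (mul_pos (inv_pos.mpr (hapos u)) (hapos v)).ne h
    have htop : localVec A u (p du) = (alpha u)⁻¹ • sphereVec G alpha u du := by
      rw [Finset.sum_range_succ, map_add] at hall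
      ext v
      have h := congrFun hall v
      rw [Pi.add_apply, Pi.smul_apply, smul_eq_mul] at h
      rw [Pi.smul_apply, sphereVec]
      rcases (hecc v).eq_or_lt with hv | hv
      · rw [localVec_eq_zero_of_degree_lt_dist G (hv ▸ hqdeg), zero_add] at h
        rw [if_pos hv, h, smul_eq_mul]
      · rw [hext v hv, add_eq_left] at h
        rw [if_neg hv.ne, h, smul_zero]
    refine ⟨le_antisymm (Finset.sup_le fun v _ => hecc v) ?_,
      isPDRAround_of_localVec_eq_sphereVec hconn hapos hpdeg hred hecc fun k hk =>
        localVec_eq_sphereVec_of_top hconn hapos hpdeg hporth hne hred hall htop hk⟩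
    obtain ⟨v, hv⟩ := Function.ne_iff.mp (hne du le_rfl)
    have hdist : G.dist u v = du := by
      by_contra hd
      rw [htop, Pi.smul_apply, sphereVec, if_neg hd] at hv
      simp at hv
    exact hdist ▸ Finset.le_sup (f := fun v => G.dist u v) (Finset.mem_univ v)
  · rintro ⟨-, hpdr⟩
    choose F hFdeg hF using exists_localVec_eq_sphereVec hconn hapos hpdr
    set g : ℝ[X] := (alpha u)⁻¹ • ∑ i ∈ Finset.range du, F i with hg
    have hgdeg : g.degree < du := by
      rw [hg, ← Polynomial.mem_degreeLT]
      refine Submodule.smul_mem _ _ (Submodule.sum_mem _ fun i hi => ?_)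
      rw [Polynomial.mem_degreeLT]
      exact (hFdeg i).trans_le (by exact_mod_cast Finset.mem_range.mp hi)
    have hgball : ∀ v, G.dist u v < du → localVec A u g v = (alpha u)⁻¹ * alpha v := by
      intro v hv
      rw [hg, map_smul, map_sum, Pi.smul_apply, Finset.sum_apply, smul_eq_mul]
      simp [hA, hF, sphereVec, hv]
    rw [localVec_sum_eq (hdeg_lt du hdu') (horth_lt du hdu') (hnorm_lt du hdu') hapos haeig hgdeg
      hgball]
    exact hgball
end
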